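/- The complex vector space of homogeneous polynomials of degree 4 in ℂ[y₀,y₁,y₂,y₃] that vanish at every singular point of the surface B₆ = 0 has dimension 10 (equivalently, the 30 singular points impose exactly 25 independent linear conditions on the 35-dimensional space of quartic forms). -/

import Mathlib

open MvPolynomial

/-- The quadric `S = y₀·y₁ − y₂·y₃`. -/
noncomputable def polyS : MvPolynomial (Fin 4) ℂ := X 0 * X 1 - X 2 * X 3

/-- The six linear forms `F₁, …, F₆` (indexed by `Fin 6`). -/
noncomputable def polyF : Fin 6 → MvPolynomial (Fin 4) ℂ :=
  ![X 0,
    X 1,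
    4 * X 0 - 2 * X 2 - 2 * X 3 + X 1,
    X 0 - 2 * X 2 - 2 * X 3 + 4 * X 1,
    X 0 + X 2 + X 3 + X 1,
    X 0 - X 2 - X 3 + X 1]
/-- The sextic `B₆ = F₁·F₂·F₃·F₄·F₅·F₆ − S³`. -/
noncomputable def polyB6 : MvPolynomial (Fin 4) ℂ := (∏ i : Fin 6, polyF i) - polyS ^ 3
/-- The space of homogeneous quartic forms vanishing at every singular point of
the surface `B₆ = 0`. -/
noncomputable def quarticsVanishingOnSingB6 : Submodule ℂ (MvPolynomial (Fin 4) ℂ) :=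
  homogeneousSubmodule (Fin 4) ℂ 4 ⊓
    ⨅ (x : Fin 4 → ℂ) (_ : x ≠ 0 ∧ ∀ i : Fin 4, eval x (pderiv i polyB6) = 0),
      LinearMap.ker (aeval x : MvPolynomial (Fin 4) ℂ →ₐ[ℂ] ℂ).toLinearMap

/-!
The quadric `S = 0` is a product of two projective lines, and the plane `Fᵢ = 0` is tangent to it
at a diagonal point `(tᵢ, tᵢ)`, so that `Fᵢ` restricts to a product of two linear forms vanishing
at `tᵢ`. Hence the points with `Fᵢ = Fⱼ = S = 0` are `(tᵢ, tⱼ)` and `(tⱼ, tᵢ)`. A quartic restricts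
to a form of bidegree `(4, 4)`; if it vanishes at all `(tᵢ, tⱼ)` with `i ≠ j`, then it has five
zeros on each of the six rulings `{tᵢ} × ℙ¹`, so it vanishes on these rulings, and then, having six
zeros on every ruling `ℙ¹ × {q}`, on the whole quadric. Such quartics are therefore the products
`S g` with `g` one of the `10`-dimensional space of quadratic forms.

Conversely, every `S g` vanishes at the singular points because these all lie on `S = 0`. Since the
`Fᵢ` involve `y₂` and `y₃` only through `y₂ + y₃`, comparing `∂₂B₆` with `∂₃B₆` gives `y₂ = y₃` at a
singular point off the quadric. On that plane `B₆` is symmetric in `y₀` and `y₁`; writing it in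
terms of `y₀ + y₁`, `y₀y₁` and `y₂`, an elimination leaves finitely many ratios to exclude.
-/

section HomogeneousPolynomials

theorem eval_eq_zero_of_forall_eval_pderiv_eq_zero {σ K : Type*} [Finite σ] [Field K] [CharZero K]
    {n : ℕ} (hn : n ≠ 0) {f : MvPolynomial σ K} (hf : f.IsHomogeneous n) {x : σ → K}
    (hx : ∀ i, eval x (pderiv i f) = 0) : eval x f = 0 := by
  have := Fintype.ofFinite σ
  have euler := congrArg (eval x) hf.sum_X_mul_pderiv
  simp only [map_sum, map_mul, hx, mul_zero, Finset.sum_const_zero, map_nsmul] at euler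
  exact (smul_eq_zero.1 euler.symm).resolve_left hn

theorem homogeneousComponent_add_mul {σ R : Type*} [CommSemiring R] {m : ℕ} {p : MvPolynomial σ R}
    (hp : p.IsHomogeneous m) (n : ℕ) (g : MvPolynomial σ R) :
    homogeneousComponent (m + n) (p * g) = p * homogeneousComponent n g := by
  let _ : GradedAlgebra (homogeneousSubmodule σ R) := gradedAlgebra
  simp only [← decomposition.decompose'_apply]
  exact DirectSum.coe_decompose_mul_add_of_left_mem (homogeneousSubmodule σ R) hp

theorem exists_isHomogeneous_eq_mul_of_dvd {σ R : Type*} [CommSemiring R] {m n : ℕ}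
    {p f : MvPolynomial σ R} (hp : p.IsHomogeneous m) (hf : f.IsHomogeneous (m + n)) (h : p ∣ f) :
    ∃ g : MvPolynomial σ R, g.IsHomogeneous n ∧ f = p * g := by
  obtain ⟨g, rfl⟩ := h
  refine ⟨homogeneousComponent n g, homogeneousComponent_isHomogeneous n g, ?_⟩
  rw [← homogeneousComponent_add_mul hp, homogeneousComponent_eq_self hf]

theorem finrank_homogeneousSubmodule (σ R : Type*) [Fintype σ] [CommRing R] [Nontrivial R]
    (n : ℕ) :
    Module.finrank R (homogeneousSubmodule σ R n) = (Fintype.card σ).multichoose n := by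
  classical
  have hdeg : {d : σ →₀ ℕ | d.degree = n} = ((Finset.univ : Finset σ).finsuppAntidiag n) := by
    ext d
    simp [Finsupp.degree_eq_sum]
  have hspan : homogeneousSubmodule σ R n =
      restrictSupport R ((Finset.univ : Finset σ).finsuppAntidiag n : Set (σ →₀ ℕ)) := by
    rw [← hdeg]
    exact homogeneousSubmodule_eq_finsupp_supported ..
  rw [hspan, Module.finrank_eq_nat_card_basis (basisRestrictSupport R _)]
  exact (Nat.card_eq_card_toFinset _).trans
    (by rw [Finset.toFinset_coe, Finset.card_finsuppAntidiag_nat_eq_multichoose, Finset.card_univ])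

theorem dvd_of_irreducible_of_forall_eval_eq_zero {σ K : Type*} [Finite σ] [Field K] [IsAlgClosed K]
    {p f : MvPolynomial σ K} (hp : Irreducible p) (h : ∀ x, eval x p = 0 → eval x f = 0) :
    p ∣ f := by
  have : (Ideal.span {p}).IsPrime := (Ideal.span_singleton_prime hp.ne_zero).2 hp.prime
  rw [← Ideal.mem_span_singleton, ← IsPrime.vanishingIdeal_zeroLocus (K := K) (Ideal.span {p})]
  intro x hx
  exact h x (hx p (Ideal.mem_span_singleton_self p))

end HomogeneousPolynomials

section Interpolation

variable {R : Type*} [CommRing R]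

/-- Pairwise linear independence of vectors of `R²`, i.e. distinctness of the corresponding points
of the projective line. -/
def PairwiseNonproportional {ι : Type*} (t : ι → R × R) : Prop :=
  Pairwise fun i j => (t i).1 * (t j).2 ≠ (t j).1 * (t i).2

theorem PairwiseNonproportional.comp {ι κ : Type*} {t : ι → R × R}
    (ht : PairwiseNonproportional t) {e : κ → ι} (he : Function.Injective e) :
    PairwiseNonproportional (t ∘ e) :=
  fun _ _ hij => ht (he.ne hij)

theorem det_projVandermonde_ne_zero [IsDomain R] {n : ℕ} {t : Fin n → R × R}
    (ht : PairwiseNonproportional t) :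
    (Matrix.projVandermonde (fun i => (t i).1) fun i => (t i).2).det ≠ 0 := by
  rw [Matrix.det_projVandermonde]
  refine Finset.prod_ne_zero_iff.2 fun i _ => Finset.prod_ne_zero_iff.2 fun j hj => ?_
  exact sub_ne_zero.2 (ht (Finset.mem_Ioi.1 hj).ne')

theorem exists_eval_line_eq_sum {σ : Type*} {n : ℕ} {f : MvPolynomial σ R}
    (hf : f.IsHomogeneous n) (P Q : σ → R) :
    ∃ k : Fin (n + 1) → R, ∀ a b : R,
      eval (a • P + b • Q) f = ∑ j : Fin (n + 1), a ^ (j : ℕ) * b ^ (j.rev : ℕ) * k j := by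
  let g : MvPolynomial (Fin 2) R := aeval (fun i => C (P i) * X 0 + C (Q i) * X 1) f
  have hg : g.IsHomogeneous n := by
    simpa only [one_mul] using hf.aeval _ fun i =>
      (isHomogeneous_C_mul_X (P i) 0).add (isHomogeneous_C_mul_X (Q i) 1)
  have hgf (a b : R) : eval ![a, b] g = eval (a • P + b • Q) f := by
    simp only [g, aeval_def, ← eval₂_id, hom_eval₂]
    congr 1
    · ext; simp
    · ext i; simp [mul_comm]
  obtain ⟨q, hq⟩ : ∃ q : Polynomial R, q.homogenize n = g :=
    ⟨_, Polynomial.homogenize_eq_of_isHomogeneous hg rfl⟩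
  refine ⟨fun j => q.coeff j, fun a b => ?_⟩
  rw [← hgf, ← hq, Polynomial.homogenize, map_sum,
    Finset.Nat.sum_antidiagonal_eq_sum_range_succ_mk, Finset.sum_range]
  refine Finset.sum_congr rfl fun j _ => ?_
  simp [eval_monomial, Finsupp.prod_fintype, Fin.prod_univ_two, mul_comm, Fin.val_rev]

theorem eval_line_eq_zero [IsDomain R] {σ : Type*} {n : ℕ} {f : MvPolynomial σ R}
    (hf : f.IsHomogeneous n) (P Q : σ → R) {t : Fin (n + 1) → R × R}
    (ht : PairwiseNonproportional t) (h : ∀ i, eval ((t i).1 • P + (t i).2 • Q) f = 0) (a b : R) :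
    eval (a • P + b • Q) f = 0 := by
  obtain ⟨k, hk⟩ := exists_eval_line_eq_sum hf P Q
  have hker : Matrix.mulVec (Matrix.projVandermonde (fun i => (t i).1) fun i => (t i).2) k = 0 :=
    _root_.funext fun i => (hk _ _).symm.trans (h i)
  have hk0 : k = 0 := Matrix.eq_zero_of_mulVec_eq_zero (det_projVandermonde_ne_zero ht) hker
  simp [hk, hk0]

end Interpolation

section Segre

variable {R : Type*} [CommRing R]

/-- The Segre parametrization `((a, b), (c, d)) ↦ (ac, bd, ad, bc)` of the quadric
`y₀y₁ = y₂y₃` by pairs of vectors. -/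
def segre (p q : R × R) : Fin 4 → R :=
  ![p.1 * q.1, p.2 * q.2, p.1 * q.2, p.2 * q.1]

theorem segre_eq_smul_left_add (p q : R × R) :
    segre p q = p.1 • segre (1, 0) q + p.2 • segre (0, 1) q := by
  ext k; fin_cases k <;> simp [segre]

theorem segre_eq_smul_right_add (p q : R × R) :
    segre p q = q.1 • segre p (1, 0) + q.2 • segre p (0, 1) := by
  ext k; fin_cases k <;> simp [segre, mul_comm]

theorem segre_ne_zero [IsDomain R] {p q : R × R} (hp : p ≠ 0) (hq : q ≠ 0) : segre p q ≠ 0 := by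
  simp only [segre, ne_eq, Prod.ext_iff, Prod.fst_zero, Prod.snd_zero, Matrix.cons_eq_zero_iff,
    mul_eq_zero] at *
  tauto

theorem exists_segre_eq {K : Type*} [Field K] {y : Fin 4 → K} (hy : y 0 * y 1 = y 2 * y 3) :
    ∃ p q, segre p q = y := by
  by_cases h0 : y 0 = 0
  · rcases mul_eq_zero.1 (hy ▸ h0 ▸ zero_mul (y 1) : y 2 * y 3 = 0) with h2 | h3
    · exact ⟨(0, 1), (y 3, y 1), by ext k; fin_cases k <;> simp [segre, h0, h2]⟩
    · exact ⟨(y 2, y 1), (0, 1), by ext k; fin_cases k <;> simp [segre, h0, h3]⟩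
  · have h1 : y 1 = y 3 / y 0 * y 2 := by
      field_simp
      linear_combination hy
    exact ⟨(1, y 3 / y 0), (y 0, y 2), by ext k; fin_cases k <;> simp [segre, h0, h1]⟩

theorem eval_segre_eq_zero_of_forall_ne [IsDomain R] {n : ℕ} {f : MvPolynomial (Fin 4) R}
    (hf : f.IsHomogeneous n) {t : Fin (n + 2) → R × R} (ht : PairwiseNonproportional t)
    (h : ∀ i j, i ≠ j → eval (segre (t i) (t j)) f = 0) (p q : R × R) :
    eval (segre p q) f = 0 := by
  have vanish_on_ruling (i : Fin (n + 2)) (q : R × R) : eval (segre (t i) q) f = 0 := by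
    rw [segre_eq_smul_right_add]
    refine eval_line_eq_zero hf _ _ (ht.comp (Fin.succAbove_right_injective (p := i)))
      (fun j => ?_) _ _
    rw [← segre_eq_smul_right_add]
    exact h _ _ (Fin.succAbove_ne i j).symm
  rw [segre_eq_smul_left_add]
  refine eval_line_eq_zero hf _ _ (ht.comp (Fin.castSucc_injective (n + 1))) (fun i => ?_) _ _
  rw [← segre_eq_smul_left_add]
  exact vanish_on_ruling _ q

end Segre

section Quadric

theorem polyS_isHomogeneous : polyS.IsHomogeneous 2 :=
  ((isHomogeneous_X ℂ 0).mul (isHomogeneous_X ℂ 1)).sub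
    ((isHomogeneous_X ℂ 2).mul (isHomogeneous_X ℂ 3))

theorem irreducible_polyS : Irreducible polyS := by
  have h : Irreducible (X 0 * X 1 + -(X 2 * X 3) : MvPolynomial (Fin 4) ℂ) := by
    refine irreducible_mul_X_add _ _ 1 (X_ne_zero 0) (by simp) ?_ ?_
    · rw [vars_neg]
      exact fun h => by simpa using vars_mul _ _ h
    · refine ((X_prime (i := 0)).irreducible.isRelPrime_iff_not_dvd).2 ?_
      rw [dvd_neg, (X_prime (i := 0)).dvd_mul]
      simp [X_dvd_X]
  rwa [polyS, sub_eq_add_neg]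

theorem eval_polyS_segre (p q : ℂ × ℂ) : eval (segre p q) polyS = 0 := by
  simp only [segre, polyS, map_sub, map_mul, eval_X, Matrix.cons_val]
  ring

theorem polyS_dvd_of_forall_eval_segre_eq_zero {f : MvPolynomial (Fin 4) ℂ}
    (h : ∀ p q, eval (segre p q) f = 0) : polyS ∣ f := by
  refine dvd_of_irreducible_of_forall_eval_eq_zero irreducible_polyS fun y hy => ?_
  obtain ⟨p, q, rfl⟩ := exists_segre_eq (y := y) (by simpa [polyS, sub_eq_zero] using hy)
  exact h p q

/-- The point `tᵢ` of the projective line such that the plane `Fᵢ = 0` is tangent to the quadric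
`S = 0` at `segre tᵢ tᵢ`, and so cuts it in the two rulings through that point. -/
def contactPoint : Fin 6 → ℂ × ℂ :=
  ![(0, 1), (1, 0), (1, 2), (2, 1), (1, -1), (1, 1)]

theorem contactPoint_pairwiseNonproportional : PairwiseNonproportional contactPoint := by
  intro i j hij
  fin_cases i <;> fin_cases j <;> first | exact absurd rfl hij | norm_num [contactPoint]

theorem contactPoint_ne_zero (i : Fin 6) : contactPoint i ≠ 0 := by
  fin_cases i <;> simp [contactPoint]

theorem polyF_eq_of_contactPoint (i : Fin 6) :
    polyF i = C ((contactPoint i).2 ^ 2) * X 0 + C ((contactPoint i).1 ^ 2) * X 1 -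
      C ((contactPoint i).1 * (contactPoint i).2) * (X 2 + X 3) := by
  have C_two : (C 2 : MvPolynomial (Fin 4) ℂ) = 2 := map_ofNat C 2
  fin_cases i <;> simp [polyF, contactPoint, C_two] <;> ring

theorem eval_polyF_segre (i : Fin 6) (p q : ℂ × ℂ) :
    eval (segre p q) (polyF i) =
      ((contactPoint i).2 * p.1 - (contactPoint i).1 * p.2) *
        ((contactPoint i).2 * q.1 - (contactPoint i).1 * q.2) := by
  simp only [polyF_eq_of_contactPoint, segre, map_sub, map_add, map_mul, eval_C, eval_X,
    Matrix.cons_val]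
  ring

end Quadric

section SingularPoints

theorem eval_pderiv_polyB6_eq_zero {x : Fin 4 → ℂ} {i j : Fin 6} (hij : i ≠ j)
    (hi : eval x (polyF i) = 0) (hj : eval x (polyF j) = 0) (hS : eval x polyS = 0) (k : Fin 4) :
    eval x (pderiv k polyB6) = 0 := by
  rw [polyB6, ← Finset.mul_prod_erase Finset.univ polyF (Finset.mem_univ i),
    ← Finset.mul_prod_erase (Finset.univ.erase i) polyF
      (Finset.mem_erase.2 ⟨hij.symm, Finset.mem_univ j⟩)]
  simp [Derivation.leibniz, Derivation.leibniz_pow, hi, hj, hS]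

theorem eval_pderiv_polyB6_segre_contactPoint {i j : Fin 6} (hij : i ≠ j) (k : Fin 4) :
    eval (segre (contactPoint i) (contactPoint j)) (pderiv k polyB6) = 0 := by
  refine eval_pderiv_polyB6_eq_zero hij ?_ ?_ (eval_polyS_segre _ _) k <;>
    rw [eval_polyF_segre] <;> ring

theorem polyF_isHomogeneous (i : Fin 6) : (polyF i).IsHomogeneous 1 := by
  rw [polyF_eq_of_contactPoint]
  exact ((isHomogeneous_C_mul_X _ 0).add (isHomogeneous_C_mul_X _ 1)).sub
    (((isHomogeneous_X ℂ 2).add (isHomogeneous_X ℂ 3)).C_mul _)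

theorem polyB6_isHomogeneous : polyB6.IsHomogeneous 6 := by
  refine IsHomogeneous.sub ?_ (polyS_isHomogeneous.pow 3)
  simpa using IsHomogeneous.prod Finset.univ polyF (fun _ => 1) fun i _ => polyF_isHomogeneous i

theorem pderiv_ofNat {σ R : Type*} [CommSemiring R] (i : σ) (n : ℕ) [n.AtLeastTwo] :
    pderiv i (ofNat(n) : MvPolynomial σ R) = 0 :=
  Derivation.map_natCast (pderiv i) n

theorem eval_pderiv_two_polyB6_sub (x : Fin 4 → ℂ) :
    eval x (pderiv 2 polyB6) - eval x (pderiv 3 polyB6) =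
      3 * eval x polyS ^ 2 * (x 3 - x 2) := by
  simp [polyB6, polyF, polyS, Fin.prod_univ_six, Derivation.leibniz, Derivation.leibniz_pow,
    pderiv_X, pderiv_ofNat]
  ring

/-- `F₃F₄` at `(u, v, w, w)`, in terms of `s = u + v` and `p = uv`. -/
def prodF₃F₄ {R : Type*} [CommRing R] (s p w : R) : R := 4 * (s - w) * (s - 4 * w) + 9 * p

/-- `F₅F₆` at `(u, v, w, w)`, in terms of `s = u + v`. -/
def prodF₅F₆ {R : Type*} [CommRing R] (s w : R) : R := s ^ 2 - 4 * w ^ 2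

theorem eval_polyB6_plane (u v w : ℂ) :
    eval ![u, v, w, w] polyB6 =
      u * v * prodF₃F₄ (u + v) (u * v) w * prodF₅F₆ (u + v) w - (u * v - w ^ 2) ^ 3 := by
  simp [polyB6, polyF, polyS, Fin.prod_univ_six, prodF₃F₄, prodF₅F₆]
  ring

-- With `G = p F₃F₄ F₅F₆ - (p - w²)³` in `s = u + v` and `p = uv`, this is the chain rule
-- `∂₀B₆ = ∂G/∂s + v ∂G/∂p`; the first term is divisible by `p`, hence by `v`.
theorem eval_pderiv_zero_polyB6_plane (u v w : ℂ) :
    eval ![u, v, w, w] (pderiv 0 polyB6) =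
      v * (2 * u * ((4 * (u + v) - 10 * w) * prodF₅F₆ (u + v) w +
          (u + v) * prodF₃F₄ (u + v) (u * v) w) +
        (prodF₃F₄ (u + v) (u * v) w + 9 * (u * v)) * prodF₅F₆ (u + v) w -
        3 * (u * v - w ^ 2) ^ 2) := by
  simp [polyB6, polyF, polyS, Fin.prod_univ_six, Derivation.leibniz, Derivation.leibniz_pow,
    pderiv_X, pderiv_ofNat, prodF₃F₄, prodF₅F₆]
  ring

theorem eval_pderiv_one_polyB6_plane (u v w : ℂ) :
    eval ![u, v, w, w] (pderiv 1 polyB6) =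
      u * (2 * v * ((4 * (u + v) - 10 * w) * prodF₅F₆ (u + v) w +
          (u + v) * prodF₃F₄ (u + v) (u * v) w) +
        (prodF₃F₄ (u + v) (u * v) w + 9 * (u * v)) * prodF₅F₆ (u + v) w -
        3 * (u * v - w ^ 2) ^ 2) := by
  simp [polyB6, polyF, polyS, Fin.prod_univ_six, Derivation.leibniz, Derivation.leibniz_pow,
    pderiv_X, pderiv_ofNat, prodF₃F₄, prodF₅F₆]
  ring

-- The product is, up to a constant, the resultant in `p` of `hs` and `3 p F₃F₄ = S (F₃F₄ + 9 p)`,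
-- where `S = p - w²`.
theorem resultant_factors_eq_zero {K : Type*} [Field K] [CharZero K] {s p w : K}
    (hD : prodF₅F₆ s w ≠ 0)
    (hB : p * prodF₃F₄ s p w * prodF₅F₆ s w = (p - w ^ 2) ^ 3)
    (hs : 9 * s * p = -8 * s ^ 3 + 30 * s ^ 2 * w - 40 * w ^ 3)
    (hp : (prodF₃F₄ s p w + 9 * p) * prodF₅F₆ s w = 3 * (p - w ^ 2) ^ 2) :
    w * (s - w) * (s - 4 * w) * (5 * w - 2 * s) * (10 * w ^ 2 + 4 * s * w - 5 * s ^ 2) = 0 := by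
  have h : 3 * p * prodF₃F₄ s p w = (p - w ^ 2) * (prodF₃F₄ s p w + 9 * p) :=
    mul_right_cancel₀ hD (by linear_combination 3 * hB - (p - w ^ 2) * hp)
  unfold prodF₃F₄ at h
  linear_combination (9 * s ^ 2 * h -
    (9 * s * p + (-8 * s ^ 3 + 30 * s ^ 2 * w - 40 * w ^ 3) + 18 * s * w ^ 2 +
      2 * s * (4 * (s - w) * (s - 4 * w))) * hs) / 8

theorem eq_sq_of_offDiagonal_critical {K : Type*} [Field K] [CharZero K] {s p w : K}
    (hB : p * prodF₃F₄ s p w * prodF₅F₆ s w = (p - w ^ 2) ^ 3)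
    (hs : (4 * s - 10 * w) * prodF₅F₆ s w + s * prodF₃F₄ s p w = 0)
    (hp : (prodF₃F₄ s p w + 9 * p) * prodF₅F₆ s w = 3 * (p - w ^ 2) ^ 2) :
    p = w ^ 2 := by
  by_contra hS
  replace hS : p - w ^ 2 ≠ 0 := sub_ne_zero.2 hS
  have hD : prodF₅F₆ s w ≠ 0 := fun h => pow_ne_zero 3 hS (by rw [← hB, h, mul_zero])
  have hs' : 9 * s * p = -8 * s ^ 3 + 30 * s ^ 2 * w - 40 * w ^ 3 := by
    unfold prodF₃F₄ prodF₅F₆ at hs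
    linear_combination hs
  have factors := resultant_factors_eq_zero hD hB hs' hp
  unfold prodF₃F₄ prodF₅F₆ at *
  simp only [mul_eq_zero, or_assoc] at factors
  rcases factors with rfl | h | h | h | h
  · have hs0 : s ≠ 0 := by rintro rfl; simp at hD
    have hp' : p = -8 / 9 * s ^ 2 := mul_left_cancel₀ hs0 (by linear_combination hs' / 9)
    subst hp'
    exact pow_ne_zero 4 hs0 (by linear_combination -27 / 388 * hp)
  · obtain rfl : s = w := by linear_combination h
    have hs0 : s ≠ 0 := by rintro rfl; simp at hD
    have hp' : p = -2 * s ^ 2 := mul_left_cancel₀ hs0 (by linear_combination hs' / 9)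
    subst hp'
    exact pow_ne_zero 4 hs0 (by linear_combination hp / 81)
  · obtain rfl : s = 4 * w := by linear_combination h
    have hw0 : w ≠ 0 := by rintro rfl; simp at hD
    have hp' : p = -2 * w ^ 2 := mul_left_cancel₀ hw0 (by linear_combination hs' / 36)
    subst hp'
    exact pow_ne_zero 4 hw0 (by linear_combination -hp / 459)
  · obtain rfl : w = 2 / 5 * s := by linear_combination h / 5
    have hs0 : s ≠ 0 := by rintro rfl; simp at hD
    have hp' : p = (2 / 5 * s) ^ 2 := mul_left_cancel₀ hs0 (by linear_combination hs' / 9)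
    exact hS (sub_eq_zero.2 hp')
  · have hs0 : s ≠ 0 := by rintro rfl; exact hD (by linear_combination -2 / 5 * h)
    have hp' : p = 2 / 5 * (s * w) :=
      mul_left_cancel₀ hs0 (by linear_combination hs' / 9 - (4 * w - 8 / 5 * s) / 9 * h)
    have hD' : s ^ 2 - 4 * w ^ 2 = 2 * (p - w ^ 2) := by linear_combination -h / 5 - 2 * hp'
    have hA : 4 * (s - w) * (s - 4 * w) + 9 * p + 9 * p = -24 * (p - w ^ 2) := by
      linear_combination -4 / 5 * h + 42 * hp'
    rw [hA, hD'] at hp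
    exact pow_ne_zero 2 hS (by linear_combination -hp / 51)

theorem eq_sq_of_diagonal_critical {K : Type*} [Field K] [CharZero K] {u w : K}
    (hB : u ^ 2 * prodF₃F₄ (2 * u) (u ^ 2) w * prodF₅F₆ (2 * u) w = (u ^ 2 - w ^ 2) ^ 3)
    (hu : 2 * u * ((4 * (2 * u) - 10 * w) * prodF₅F₆ (2 * u) w +
          2 * u * prodF₃F₄ (2 * u) (u ^ 2) w) +
        (prodF₃F₄ (2 * u) (u ^ 2) w + 9 * u ^ 2) * prodF₅F₆ (2 * u) w =
        3 * (u ^ 2 - w ^ 2) ^ 2) :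
    u ^ 2 = w ^ 2 := by
  by_contra hS
  replace hS : u ^ 2 - w ^ 2 ≠ 0 := sub_ne_zero.2 hS
  have hA : prodF₃F₄ (2 * u) (u ^ 2) w = (5 * u - 4 * w) ^ 2 := by unfold prodF₃F₄; ring
  have hD : prodF₅F₆ (2 * u) w = 4 * (u ^ 2 - w ^ 2) := by unfold prodF₅F₆; ring
  rw [hA, hD] at hB hu
  have square : (2 * u * (5 * u - 4 * w)) ^ 2 = (u ^ 2 - w ^ 2) ^ 2 :=
    mul_right_cancel₀ hS (by linear_combination hB)
  have hu0 : u ≠ 0 := by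
    rintro rfl
    exact pow_ne_zero 2 hS (by linear_combination -square)
  have linear : u ^ 2 - w ^ 2 = 2 * (5 * u - 4 * w) ^ 2 + 10 * u * (5 * u - 4 * w) :=
    mul_right_cancel₀ hS (by linear_combination (square - hu) / 2)
  rcases sq_eq_sq_iff_eq_or_eq_neg.1 square with h | h
  · have hm : 5 * u - 4 * w ≠ 0 := fun hm => hS (by rw [← h, hm, mul_zero])
    have : 5 * u - 4 * w = -4 * u := mul_left_cancel₀ hm (by linear_combination -(h + linear) / 2)
    obtain rfl : w = 9 / 4 * u := by linear_combination -this / 4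
    exact pow_ne_zero 2 hu0 (by linear_combination -16 / 63 * h)
  · have hm : 5 * u - 4 * w ≠ 0 := fun hm => hS (by rw [← neg_eq_zero, ← h, hm, mul_zero])
    have : 5 * u - 4 * w = -6 * u := mul_left_cancel₀ hm (by linear_combination (h - linear) / 2)
    obtain rfl : w = 11 / 4 * u := by linear_combination -this / 4
    exact pow_ne_zero 2 hu0 (by linear_combination -16 / 297 * h)

theorem mul_eq_sq_of_forall_eval_pderiv_polyB6_eq_zero {u v w : ℂ}
    (h : ∀ i, eval ![u, v, w, w] (pderiv i polyB6) = 0) : u * v = w ^ 2 := by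
  have hB := eval_eq_zero_of_forall_eval_pderiv_eq_zero (by norm_num) polyB6_isHomogeneous h
  have h0 := h 0
  have h1 := h 1
  rw [eval_polyB6_plane, sub_eq_zero] at hB
  rw [eval_pderiv_zero_polyB6_plane] at h0
  rw [eval_pderiv_one_polyB6_plane] at h1
  by_contra hS
  have huv : u * v ≠ 0 := by
    intro huv
    rw [huv, zero_mul, zero_mul, eq_comm] at hB
    exact hS (huv.trans (sub_eq_zero.1 (pow_eq_zero_iff three_ne_zero |>.1 hB)))
  obtain rfl | hne := eq_or_ne u v
  · rw [← two_mul, ← sq] at hB h0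
    refine hS (sq u ▸ eq_sq_of_diagonal_critical hB ?_)
    exact sub_eq_zero.1 ((mul_eq_zero.1 h0).resolve_left (left_ne_zero_of_mul huv))
  · have hp := mul_left_cancel₀ (sub_ne_zero.2 hne)
      (by linear_combination h1 - h0 : (u - v) *
        ((prodF₃F₄ (u + v) (u * v) w + 9 * (u * v)) * prodF₅F₆ (u + v) w) =
          (u - v) * (3 * (u * v - w ^ 2) ^ 2))
    rw [hp] at h0
    have hs := mul_left_cancel₀ huv (by linear_combination h0 / 2 : u * v *
      ((4 * (u + v) - 10 * w) * prodF₅F₆ (u + v) w +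
        (u + v) * prodF₃F₄ (u + v) (u * v) w) = u * v * 0)
    exact hS (eq_sq_of_offDiagonal_critical hB hs hp)

theorem eval_polyS_eq_zero_of_forall_eval_pderiv_polyB6_eq_zero {x : Fin 4 → ℂ}
    (hx : ∀ i, eval x (pderiv i polyB6) = 0) : eval x polyS = 0 := by
  by_contra hS
  have h23 : x 3 = x 2 := by
    have h := eval_pderiv_two_polyB6_sub x
    rw [hx, hx, sub_self, eq_comm, mul_eq_zero] at h
    exact sub_eq_zero.1 (h.resolve_left (by simpa using hS))
  obtain ⟨u, v, w, rfl⟩ : ∃ u v w, x = ![u, v, w, w] :=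
    ⟨x 0, x 1, x 2, by ext i; fin_cases i <;> simp [h23]⟩
  exact hS (by simp [polyS, mul_eq_sq_of_forall_eval_pderiv_polyB6_eq_zero hx, sq])

end SingularPoints

theorem quarticsVanishingOnSingB6_eq_map_mulLeft :
    quarticsVanishingOnSingB6 =
      (homogeneousSubmodule (Fin 4) ℂ 2).map (LinearMap.mulLeft ℂ polyS) := by
  ext f
  simp only [quarticsVanishingOnSingB6, Submodule.mem_inf, Submodule.mem_iInf, Submodule.mem_map,
    mem_homogeneousSubmodule, LinearMap.mem_ker, LinearMap.mulLeft_apply,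
    AlgHom.toLinearMap_apply]
  constructor
  · rintro ⟨hf, hvanish⟩
    have vanish_on_quadric : ∀ p q, eval (segre p q) f = 0 :=
      eval_segre_eq_zero_of_forall_ne hf contactPoint_pairwiseNonproportional fun i j hij =>
        hvanish _ ⟨segre_ne_zero (contactPoint_ne_zero i) (contactPoint_ne_zero j),
          eval_pderiv_polyB6_segre_contactPoint hij⟩
    obtain ⟨g, hg, rfl⟩ := exists_isHomogeneous_eq_mul_of_dvd (n := 2) polyS_isHomogeneous hf
      (polyS_dvd_of_forall_eval_segre_eq_zero vanish_on_quadric)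
    exact ⟨g, hg, rfl⟩
  · rintro ⟨g, hg, rfl⟩
    refine ⟨polyS_isHomogeneous.mul hg, fun x hx => ?_⟩
    simp [eval_polyS_eq_zero_of_forall_eval_pderiv_polyB6_eq_zero hx.2]

/-- The `30` singular points of `B₆ = 0` impose exactly `25` independent conditions
on quartic forms: the space of quartics through them has dimension `10`. -/
theorem finrank_quartics_vanishing_on_singB6 :
    Module.finrank ℂ ↥quarticsVanishingOnSingB6 = 10 := by
  have mul_polyS_injective : Function.Injective (LinearMap.mulLeft ℂ polyS) :=
    mul_right_injective₀ irreducible_polyS.ne_zero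
  rw [quarticsVanishingOnSingB6_eq_map_mulLeft,
    ← (Submodule.equivMapOfInjective _ mul_polyS_injective _).finrank_eq,
    finrank_homogeneousSubmodule, Fintype.card_fin, Nat.multichoose_eq]
  rfl
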